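/- Let (Q1,+1) and (Q2,+2) be commutative Moufang loops and for i = 1,2 let φi, ψi be automorphisms of (Qi,+i) with x +i φi(x) ∈ Z(Qi) and x +i ψi(x) ∈ Z(Qi) for all x, and let ci ∈ Z(Qi). Let (Qi,*i) be the quasigroup with x *i y = (φi(x) +i ψi(y)) +i ci. Then (Q1,*1) and (Q2,*2) are isomorphic if and only if there exist a loop isomorphism f : (Q1,+1) → (Q2,+2) and an element u ∈ { x -1 (φ1(x) +1 ψ1(x)) : x ∈ Q1 } such that φ2 = f∘φ1∘f⁻¹, ψ2 = f∘ψ1∘f⁻¹, and c2 = f(c1 +1 u). -/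

import Mathlib

/-- A loop: a quasigroup with a two-sided neutral element. -/
structure Loop (Q : Type) where
  add : Q → Q → Q
  zero : Q
  addLeftBij : ∀ x, Function.Bijective fun y => add x y
  addRightBij : ∀ x, Function.Bijective fun y => add y x
  zero_add : ∀ x, add zero x = x
  add_zero : ∀ x, add x zero = x

namespace Loop

/-- The center of a loop: elements commuting and associating with everything. -/
def center {Q : Type} (L : Loop Q) : Set Q :=
  {z | (∀ x, L.add z x = L.add x z) ∧
       (∀ x y, L.add z (L.add x y) = L.add (L.add z x) y) ∧
       (∀ x y, L.add x (L.add z y) = L.add (L.add x z) y) ∧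
       (∀ x y, L.add x (L.add y z) = L.add (L.add x y) z)}

/-- A map `α` is central if `Z(Q) + α(x) = Z(Q) + x` for every `x`. -/
def IsCentral {Q : Type} (L : Loop Q) (α : Q → Q) : Prop :=
  ∀ x, (fun z => L.add z (α x)) '' L.center = (fun z => L.add z x) '' L.center

/-- Automorphism of a loop: a bijective map respecting the operation. -/
def IsAut {Q : Type} (L : Loop Q) (f : Q → Q) : Prop :=
  Function.Bijective f ∧ ∀ x y, f (L.add x y) = L.add (f x) (f y)

/-- `neg` provides two-sided inverses for the loop. -/
def IsTwoSidedInv {Q : Type} (L : Loop Q) (neg : Q → Q) : Prop :=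
  ∀ x, L.add x (neg x) = L.zero ∧ L.add (neg x) x = L.zero

/-- Commutative Moufang loop: commutative and satisfying the Moufang identity. -/
def IsCommMoufang {Q : Type} (L : Loop Q) : Prop :=
  (∀ x y, L.add x y = L.add y x) ∧
  (∀ x y z, L.add x (L.add y (L.add x z)) = L.add (L.add (L.add x y) x) z)

end Loop

/-!
In a commutative Moufang loop every element `3x` is central. Since `φ a` and `ψ a` agree with `-a`
modulo the center, `d = -a + (φ a + ψ a)` differs from `-3a` by a central element, so it is central,
and the translation `x ↦ x + a` carries the affine operation with constant `c + d` to the one with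
constant `c`. Dividing an isomorphism by its value at `0` therefore reduces the problem to
bijections fixing `0`. Such a bijection respects the affine operations exactly when it is a loop
homomorphism that intertwines the coefficients and maps one constant to the other.
-/

namespace Loop

open Function

theorem semiconj_equiv_iff {α β : Type*} (f : α ≃ β) {φ : α → α} {ψ : β → β} :
    Semiconj f φ ψ ↔ ∀ x, ψ x = f (φ (f.symm x)) := by
  simp only [f.surjective.forall, f.symm_apply_apply, Semiconj, eq_comm]

section Loops

variable {Q P : Type} {L : Loop Q} {M : Loop P}

local infixl:65 " ∔ " => Loop.add L

theorem add_left_cancel {x y z : Q} (e : x ∔ y = x ∔ z) : y = z :=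
  (L.addLeftBij x).1 e

theorem add_right_cancel {x y z : Q} (e : x ∔ z = y ∔ z) : x = y :=
  (L.addRightBij z).1 e

theorem map_zero_of_semiconj₂ {f : Q → P} (hf : Semiconj₂ f L.add M.add) :
    f L.zero = M.zero := by
  apply add_left_cancel (L := M) (x := f L.zero)
  rw [← hf, L.zero_add, M.add_zero]

theorem map_neg_of_semiconj₂ {neg : Q → Q} {neg' : P → P} {f : Q → P}
    (hf : Semiconj₂ f L.add M.add) (hneg : ∀ x, x ∔ neg x = L.zero)
    (hneg' : ∀ x, M.add x (neg' x) = M.zero) (x : Q) : f (neg x) = neg' (f x) := by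
  apply add_left_cancel (L := M) (x := f x)
  rw [← hf, hneg, hneg', map_zero_of_semiconj₂ hf]

theorem add_right_comm_of_mem_center {z : Q} (hz : z ∈ L.center) (x y : Q) :
    x ∔ z ∔ y = x ∔ y ∔ z := by
  rw [← hz.2.2.1, hz.1, hz.2.2.2]

theorem add_add_add_comm_of_mem_center {z w : Q} (hz : z ∈ L.center) (hw : w ∈ L.center)
    (x y : Q) : x ∔ z ∔ (y ∔ w) = x ∔ y ∔ (z ∔ w) := by
  rw [hw.2.2.2, hw.2.2.2, add_right_comm_of_mem_center hz]

theorem add_mem_center {z w : Q} (hz : z ∈ L.center) (hw : w ∈ L.center) :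
    z ∔ w ∈ L.center := by
  refine ⟨fun x => ?_, fun x y => ?_, fun x y => ?_, fun x y => ?_⟩
  · rw [← hz.2.1, hw.1, hz.1, hw.2.2.2, add_right_comm_of_mem_center hw]
  · rw [← hz.2.1, hw.2.1, hz.2.1, hz.2.1]
  · rw [← hz.2.1, hz.2.2.1, hw.2.2.1, hw.2.2.2]
  · rw [hw.2.2.2, hw.2.2.2, hw.2.2.2, hz.2.2.2]

theorem exists_isTwoSidedInv_of_comm (hcomm : ∀ x y, x ∔ y = y ∔ x) :
    ∃ neg : Q → Q, L.IsTwoSidedInv neg := by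
  choose neg hneg using fun x => (L.addLeftBij x).2 L.zero
  exact ⟨neg, fun x => ⟨hneg x, (hcomm _ _).trans (hneg x)⟩⟩

theorem mem_center_of_comm_of_left_comm (hcomm : ∀ x y, x ∔ y = y ∔ x) {z : Q}
    (hz : ∀ x y, x ∔ (z ∔ y) = z ∔ (x ∔ y)) : z ∈ L.center := by
  have assoc (x y : Q) : z ∔ (x ∔ y) = z ∔ x ∔ y := by
    rw [hcomm (z ∔ x), hz, hcomm y]
  refine ⟨hcomm z, assoc, fun x y => ?_, fun x y => ?_⟩
  · rw [hz, assoc, hcomm z]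
  · rw [hcomm y, hz, hcomm z]

/-- Right translation `x ↦ x + a` as a permutation; its inverse is right division by `a`. -/
noncomputable def addRight (L : Loop Q) (a : Q) : Q ≃ Q :=
  Equiv.ofBijective _ (L.addRightBij a)

theorem exists_map_eq_zero_and_eq_add_right {α : Type*} (L : Loop Q) (g : α ≃ Q) (x₀ : α) :
    ∃ f : α ≃ Q, f x₀ = L.zero ∧ ∃ t, ⇑g = fun x => L.add (f x) (f t) := by
  let f := g.trans (L.addRight (g x₀)).symm
  refine ⟨f, (L.addRight _).symm_apply_eq.2 (L.zero_add _).symm, f.symm (g x₀), ?_⟩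
  funext x
  rw [f.apply_symm_apply]
  exact ((L.addRight _).apply_symm_apply (g x)).symm

/-- The affine operation `x * y = (φ x + ψ y) + c`, which over a commutative Moufang loop and with
central data gives the centrally affine quasigroups. -/
def affine (L : Loop Q) (φ ψ : Q → Q) (c x y : Q) : Q :=
  L.add (L.add (φ x) (ψ y)) c

end Loops

namespace IsCommMoufang

variable {Q : Type} {L : Loop Q} {neg : Q → Q}

local infixl:65 " ∔ " => Loop.add L

theorem add_self_add (h : L.IsCommMoufang) (x y : Q) : x ∔ x ∔ y = x ∔ (x ∔ y) := by
  simpa only [L.zero_add, L.add_zero] using (h.2 x L.zero y).symm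

theorem add_left_comm_self (h : L.IsCommMoufang) (x y z : Q) :
    y ∔ (x ∔ (x ∔ z)) = x ∔ (x ∔ y ∔ z) := by
  rw [h.1 y, h.1 x (x ∔ z), ← h.2, h.1 z]

theorem neg_add_cancel_left (h : L.IsCommMoufang) (hneg : L.IsTwoSidedInv neg) (x y : Q) :
    neg x ∔ (x ∔ y) = y := by
  apply add_left_cancel (L := L) (x := x)
  rw [h.2, (hneg x).1, L.zero_add]

theorem add_neg_cancel_left (h : L.IsCommMoufang) (hneg : L.IsTwoSidedInv neg) (x y : Q) :
    x ∔ (neg x ∔ y) = y := by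
  apply add_left_cancel (L := L) (x := neg x)
  rw [h.neg_add_cancel_left hneg]

theorem add_neg_cancel_right (h : L.IsCommMoufang) (hneg : L.IsTwoSidedInv neg) (x y : Q) :
    x ∔ y ∔ neg y = x := by
  rw [h.1, h.1 x, h.neg_add_cancel_left hneg]

theorem neg_add_cancel_right (h : L.IsCommMoufang) (hneg : L.IsTwoSidedInv neg) (x y : Q) :
    x ∔ neg y ∔ y = x := by
  rw [h.1, h.1 x, h.add_neg_cancel_left hneg]

theorem add_neg_add (h : L.IsCommMoufang) (hneg : L.IsTwoSidedInv neg) (x y : Q) :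
    x ∔ neg (x ∔ y) = neg y := by
  have e := h.neg_add_cancel_left hneg (x ∔ y) (neg y)
  rwa [h.add_neg_cancel_right hneg, h.1] at e

theorem neg_neg_add (h : L.IsCommMoufang) (hneg : L.IsTwoSidedInv neg) (x y : Q) :
    neg (neg x ∔ y) = x ∔ neg y := by
  have e := h.add_neg_add hneg x (neg x ∔ y)
  rw [h.add_neg_cancel_left hneg] at e
  exact e.symm

theorem add_add_add_comm_self (h : L.IsCommMoufang) (x y z : Q) :
    x ∔ y ∔ (x ∔ z) = x ∔ x ∔ (y ∔ z) := by
  obtain ⟨neg, hneg⟩ := exists_isTwoSidedInv_of_comm h.1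
  have e : x ∔ y = x ∔ x ∔ (y ∔ z) ∔ neg (x ∔ z) := by
    calc x ∔ y = x ∔ (y ∔ z ∔ (x ∔ neg (x ∔ z))) := by
          rw [h.add_neg_add hneg, h.add_neg_cancel_right hneg]
      _ = x ∔ x ∔ (y ∔ z) ∔ neg (x ∔ z) := by
          rw [h.2, h.1 _ x, h.add_self_add]
  rw [e, h.neg_add_cancel_right hneg]

theorem thrice_mem_center (h : L.IsCommMoufang) (x : Q) : x ∔ (x ∔ x) ∈ L.center := by
  have thrice_add (y : Q) : x ∔ (x ∔ x) ∔ y = x ∔ (x ∔ (x ∔ y)) := by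
    rw [h.2, h.1 x (x ∔ x)]
  apply mem_center_of_comm_of_left_comm h.1
  intro y z
  calc y ∔ (x ∔ (x ∔ x) ∔ z) = y ∔ (x ∔ (x ∔ (x ∔ z))) := by rw [thrice_add]
    _ = x ∔ (x ∔ y ∔ (x ∔ z)) := h.add_left_comm_self x y (x ∔ z)
    _ = x ∔ (x ∔ (x ∔ (y ∔ z))) := by rw [h.add_add_add_comm_self, h.add_self_add]
    _ = x ∔ (x ∔ x) ∔ (y ∔ z) := (thrice_add _).symm

theorem add_add_add_comm_of_add_mem_center (h : L.IsCommMoufang) {a b c : Q}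
    (hb : a ∔ b ∈ L.center) (hc : a ∔ c ∈ L.center) (y z : Q) :
    y ∔ b ∔ (z ∔ c) = y ∔ z ∔ (b ∔ c) := by
  obtain ⟨neg, hneg⟩ := exists_isTwoSidedInv_of_comm h.1
  rw [← h.neg_add_cancel_left hneg a b, ← h.neg_add_cancel_left hneg a c]
  generalize neg a = n, a ∔ b = p, a ∔ c = q at *
  calc y ∔ (n ∔ p) ∔ (z ∔ (n ∔ q)) = n ∔ y ∔ (n ∔ z) ∔ (p ∔ q) := by
        rw [hb.2.2.2, hc.2.2.2, add_add_add_comm_of_mem_center hb hc, h.1 y, h.1 z]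
    _ = y ∔ z ∔ (n ∔ n ∔ (p ∔ q)) := by
        rw [h.add_add_add_comm_self, h.1 (n ∔ n), (add_mem_center hb hc).2.2.2]
    _ = y ∔ z ∔ (n ∔ p ∔ (n ∔ q)) := by rw [add_add_add_comm_of_mem_center hb hc]

theorem neg_add_add_mem_center (h : L.IsCommMoufang) (hneg : L.IsTwoSidedInv neg) {a b c : Q}
    (hb : a ∔ b ∈ L.center) (hc : a ∔ c ∈ L.center) : neg a ∔ (b ∔ c) ∈ L.center := by
  rw [← h.neg_add_cancel_left hneg a b, ← h.neg_add_cancel_left hneg a c,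
    add_add_add_comm_of_mem_center hb hc, (add_mem_center hb hc).2.2.2]
  exact add_mem_center (h.thrice_mem_center _) (add_mem_center hb hc)

theorem affine_add_right (h : L.IsCommMoufang) (hneg : L.IsTwoSidedInv neg) {φ ψ : Q → Q}
    (hφ : Semiconj₂ φ L.add L.add) (hψ : Semiconj₂ ψ L.add L.add) {a c : Q}
    (hφa : a ∔ φ a ∈ L.center) (hψa : a ∔ ψ a ∈ L.center) (hc : c ∈ L.center) (y z : Q) :
    L.affine φ ψ c (y ∔ a) (z ∔ a) =
      L.affine φ ψ (c ∔ (neg a ∔ (φ a ∔ ψ a))) y z ∔ a := by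
  have hd := h.neg_add_add_mem_center hneg hφa hψa
  calc φ (y ∔ a) ∔ ψ (z ∔ a) ∔ c = φ y ∔ ψ z ∔ (a ∔ (neg a ∔ (φ a ∔ ψ a))) ∔ c := by
        rw [hφ, hψ, h.add_add_add_comm_of_add_mem_center hφa hψa, h.add_neg_cancel_left hneg]
    _ = φ y ∔ ψ z ∔ (c ∔ (neg a ∔ (φ a ∔ ψ a))) ∔ a := by
        rw [hd.2.2.2, hd.2.2.2, ← add_right_comm_of_mem_center hc _ (neg a ∔ _),
          ← add_right_comm_of_mem_center hc _ a, add_right_comm_of_mem_center hd]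

theorem semiconj₂_addRight_affine_iff {α : Type*} (h : L.IsCommMoufang)
    (hneg : L.IsTwoSidedInv neg) {op : α → α → α} {φ ψ : Q → Q}
    (hφ : Semiconj₂ φ L.add L.add) (hψ : Semiconj₂ ψ L.add L.add) {a c : Q}
    (hφa : a ∔ φ a ∈ L.center) (hψa : a ∔ ψ a ∈ L.center) (hc : c ∈ L.center) (f : α → Q) :
    Semiconj₂ (fun x => f x ∔ a) op (L.affine φ ψ c) ↔
      Semiconj₂ f op (L.affine φ ψ (c ∔ (neg a ∔ (φ a ∔ ψ a)))) := by
  refine forall₂_congr fun x y => ?_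
  rw [h.affine_add_right hneg hφ hψ hφa hψa hc]
  exact (L.addRightBij a).1.eq_iff

end IsCommMoufang

section Isomorphism

variable {Q₁ Q₂ : Type} {L₁ : Loop Q₁} {L₂ : Loop Q₂}

local infixl:65 " +₁ " => Loop.add L₁
local infixl:65 " +₂ " => Loop.add L₂

theorem eq_of_map_add_right_eq {f A : Q₁ → Q₂} {c₁ : Q₁} {c₂ : Q₂}
    (hf : f L₁.zero = L₂.zero) (hA : Semiconj₂ A L₁.add L₂.add)
    (hfA : ∀ x, f (x +₁ c₁) = A x +₂ c₂) : f = A ∧ A c₁ = c₂ := by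
  have hAc : A c₁ = c₂ := by
    obtain ⟨y, hy⟩ : ∃ y, y +₁ c₁ = L₁.zero := (L₁.addRightBij c₁).2 _
    apply add_left_cancel (L := L₂) (x := A y)
    rw [← hA, ← hfA, hy, hf, map_zero_of_semiconj₂ hA]
  refine ⟨funext fun x => ?_, hAc⟩
  obtain ⟨y, rfl⟩ : ∃ y, y +₁ c₁ = x := (L₁.addRightBij c₁).2 x
  rw [hfA, hA, hAc]

theorem semiconj₂_affine_iff {f : Q₁ → Q₂} {φ₁ ψ₁ : Q₁ → Q₁} {φ₂ ψ₂ : Q₂ → Q₂} {c₁ : Q₁} {c₂ : Q₂}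
    (hf : f L₁.zero = L₂.zero) (hφ₁ : Surjective φ₁) (hψ₁ : Surjective ψ₁)
    (hφ₁0 : φ₁ L₁.zero = L₁.zero) (hψ₁0 : ψ₁ L₁.zero = L₁.zero)
    (hφ₂0 : φ₂ L₂.zero = L₂.zero) (hψ₂0 : ψ₂ L₂.zero = L₂.zero) :
    Semiconj₂ f (L₁.affine φ₁ ψ₁ c₁) (L₂.affine φ₂ ψ₂ c₂) ↔
      Semiconj₂ f L₁.add L₂.add ∧ Semiconj f φ₁ φ₂ ∧ Semiconj f ψ₁ ψ₂ ∧ f c₁ = c₂ := by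
  refine ⟨fun h => ?_, fun ⟨hadd, hφ, hψ, hc⟩ x y => ?_⟩
  · let A (x : Q₁) : Q₂ := (L₂.addRight c₂).symm (f (x +₁ c₁))
    have hfA (x : Q₁) : f (x +₁ c₁) = A x +₂ c₂ :=
      ((L₂.addRight c₂).apply_symm_apply _).symm
    have hA_affine (x y : Q₁) : A (φ₁ x +₁ ψ₁ y) = φ₂ (f x) +₂ ψ₂ (f y) :=
      add_right_cancel ((hfA _).symm.trans (h x y))
    have hAφ (x : Q₁) : A (φ₁ x) = φ₂ (f x) := by
      simpa only [hψ₁0, hf, hψ₂0, L₁.add_zero, L₂.add_zero] using hA_affine x L₁.zero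
    have hAψ (x : Q₁) : A (ψ₁ x) = ψ₂ (f x) := by
      simpa only [hφ₁0, hf, hφ₂0, L₁.zero_add, L₂.zero_add] using hA_affine L₁.zero x
    have hA : Semiconj₂ A L₁.add L₂.add :=
      hφ₁.forall.2 fun x => hψ₁.forall.2 fun y => by rw [hA_affine, hAφ, hAψ]
    obtain ⟨hf_eq, hc⟩ := eq_of_map_add_right_eq hf hA hfA
    rw [← hf_eq] at hA hAφ hAψ hc
    exact ⟨hA, hAφ, hAψ, hc⟩
  · simp only [affine, hadd _ _, hφ.eq, hψ.eq, hc]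

theorem IsCommMoufang.map_eq_add_neg_add_iff (h₂ : L₂.IsCommMoufang) {neg₁ : Q₁ → Q₁}
    {neg₂ : Q₂ → Q₂} (hneg₁ : ∀ x, x +₁ neg₁ x = L₁.zero) (hneg₂ : L₂.IsTwoSidedInv neg₂)
    {f : Q₁ → Q₂} (hf : Semiconj₂ f L₁.add L₂.add) (x y c₁ : Q₁) (c₂ : Q₂) :
    f c₁ = c₂ +₂ (neg₂ (f x) +₂ f y) ↔ c₂ = f (c₁ +₁ (x +₁ neg₁ y)) := by
  rw [hf, hf, map_neg_of_semiconj₂ hf hneg₁ fun x => (hneg₂ x).1, ← h₂.neg_neg_add hneg₂]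
  constructor <;> intro e
  · rw [e, h₂.add_neg_cancel_right hneg₂]
  · rw [e, h₂.neg_add_cancel_right hneg₂]

end Isomorphism

end Loop

open Function Loop in
theorem stmt_general {Q₁ Q₂ : Type} (L₁ : Loop Q₁) (L₂ : Loop Q₂) (h₂ : L₂.IsCommMoufang)
    (neg₁ : Q₁ → Q₁) (hneg₁ : ∀ x, L₁.add x (neg₁ x) = L₁.zero)
    (φ₁ ψ₁ : Q₁ → Q₁) (hφ₁ : Surjective φ₁) (hψ₁ : Surjective ψ₁)
    (hφ₁0 : φ₁ L₁.zero = L₁.zero) (hψ₁0 : ψ₁ L₁.zero = L₁.zero)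
    (φ₂ ψ₂ : Q₂ → Q₂) (hφ₂ : Semiconj₂ φ₂ L₂.add L₂.add) (hψ₂ : Semiconj₂ ψ₂ L₂.add L₂.add)
    (hφ₂c : ∀ x, L₂.add x (φ₂ x) ∈ L₂.center) (hψ₂c : ∀ x, L₂.add x (ψ₂ x) ∈ L₂.center)
    (c₁ : Q₁) (c₂ : Q₂) (hc₂ : c₂ ∈ L₂.center) :
    (∃ g : Q₁ ≃ Q₂, Semiconj₂ g (L₁.affine φ₁ ψ₁ c₁) (L₂.affine φ₂ ψ₂ c₂)) ↔
      ∃ f : Q₁ ≃ Q₂, Semiconj₂ f L₁.add L₂.add ∧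
        ∃ u ∈ {w : Q₁ | ∃ x, w = L₁.add x (neg₁ (L₁.add (φ₁ x) (ψ₁ x)))},
          (∀ x, φ₂ x = f (φ₁ (f.symm x))) ∧
          (∀ x, ψ₂ x = f (ψ₁ (f.symm x))) ∧
          c₂ = f (L₁.add c₁ u) := by
  obtain ⟨neg₂, hneg₂⟩ := exists_isTwoSidedInv_of_comm h₂.1
  have translate_iff (f : Q₁ ≃ Q₂) (hf0 : f L₁.zero = L₂.zero) (t : Q₁) :
      Semiconj₂ (fun x => L₂.add (f x) (f t)) (L₁.affine φ₁ ψ₁ c₁) (L₂.affine φ₂ ψ₂ c₂) ↔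
        Semiconj₂ f L₁.add L₂.add ∧ (∀ x, φ₂ x = f (φ₁ (f.symm x))) ∧
          (∀ x, ψ₂ x = f (ψ₁ (f.symm x))) ∧
          c₂ = f (L₁.add c₁ (L₁.add t (neg₁ (L₁.add (φ₁ t) (ψ₁ t))))) := by
    rw [h₂.semiconj₂_addRight_affine_iff hneg₂ hφ₂ hψ₂ (hφ₂c _) (hψ₂c _) hc₂,
      semiconj₂_affine_iff hf0 hφ₁ hψ₁ hφ₁0 hψ₁0 (map_zero_of_semiconj₂ hφ₂)
        (map_zero_of_semiconj₂ hψ₂), ← semiconj_equiv_iff, ← semiconj_equiv_iff]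
    refine and_congr_right fun hf => and_congr_right fun hφ => and_congr_right fun hψ => ?_
    rw [← hφ.eq, ← hψ.eq, ← hf, h₂.map_eq_add_neg_add_iff hneg₁ hneg₂ hf]
  constructor
  · rintro ⟨g, hg⟩
    obtain ⟨f, hf0, t, hgf⟩ := L₂.exists_map_eq_zero_and_eq_add_right g L₁.zero
    rw [hgf] at hg
    obtain ⟨hf, hφ, hψ, hc⟩ := (translate_iff f hf0 t).1 hg
    exact ⟨f, hf, _, ⟨_, rfl⟩, hφ, hψ, hc⟩
  · rintro ⟨f, hf, _, ⟨t, rfl⟩, hφψc⟩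
    exact ⟨f.trans (L₂.addRight (f t)), (translate_iff f (map_zero_of_semiconj₂ hf) t).2 ⟨hf, hφψc⟩⟩

open Loop in
/-- Isomorphism theorem for centrally affine quasigroups over commutative
Moufang loops. -/
theorem stmt {Q₁ Q₂ : Type} (L₁ : Loop Q₁) (L₂ : Loop Q₂)
    (h₁ : L₁.IsCommMoufang) (h₂ : L₂.IsCommMoufang)
    (neg₁ : Q₁ → Q₁) (hneg₁ : L₁.IsTwoSidedInv neg₁)
    (φ₁ ψ₁ : Q₁ → Q₁) (hφ₁ : L₁.IsAut φ₁) (hψ₁ : L₁.IsAut ψ₁)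
    (hφ₁c : ∀ x, L₁.add x (φ₁ x) ∈ L₁.center)
    (hψ₁c : ∀ x, L₁.add x (ψ₁ x) ∈ L₁.center)
    (φ₂ ψ₂ : Q₂ → Q₂) (hφ₂ : L₂.IsAut φ₂) (hψ₂ : L₂.IsAut ψ₂)
    (hφ₂c : ∀ x, L₂.add x (φ₂ x) ∈ L₂.center)
    (hψ₂c : ∀ x, L₂.add x (ψ₂ x) ∈ L₂.center)
    (c₁ : Q₁) (hc₁ : c₁ ∈ L₁.center) (c₂ : Q₂) (hc₂ : c₂ ∈ L₂.center) :
    (∃ g : Q₁ ≃ Q₂, ∀ x y,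
        g (L₁.add (L₁.add (φ₁ x) (ψ₁ y)) c₁) =
          L₂.add (L₂.add (φ₂ (g x)) (ψ₂ (g y))) c₂) ↔
      (∃ f : Q₁ ≃ Q₂, (∀ x y, f (L₁.add x y) = L₂.add (f x) (f y)) ∧
        ∃ u ∈ {w : Q₁ | ∃ x, w = L₁.add x (neg₁ (L₁.add (φ₁ x) (ψ₁ x)))},
          (∀ x, φ₂ x = f (φ₁ (f.symm x))) ∧
          (∀ x, ψ₂ x = f (ψ₁ (f.symm x))) ∧
          c₂ = f (L₁.add c₁ u)) :=
  stmt_general L₁ L₂ h₂ neg₁ (fun x => (hneg₁ x).1) φ₁ ψ₁ hφ₁.1.2 hψ₁.1.2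
    (map_zero_of_semiconj₂ hφ₁.2) (map_zero_of_semiconj₂ hψ₁.2)
    φ₂ ψ₂ hφ₂.2 hψ₂.2 hφ₂c hψ₂c c₁ c₂ hc₂
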